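/- arXiv:1603.09472 — 2 statements merged into one kernel-verified Lean document; each statement's English description precedes it below -/
import Mathlib

section
/- Let (Ω,𝓕,ℙ) be a probability space, (T,𝓑,μ) a σ-finite measure space, and S a Polish space. Let c: Ω×T×S→ℝ be jointly measurable with s ↦ c_t(ω,s) continuous for every (ω,t), and let X^n: Ω×T→S (n=0,1,2,…) be jointly measurable processes. Let h ∈ L¹(μ) with h ≥ 0, set c^h_t(ω,x) := max{−h_t, min{h_t, c_t(ω,x)}} and I(X^n,c^h)(ω) = ∫_T c^h_t(ω,X^n_t(ω)) μ(dt). Suppose there exists T₀ ∈ 𝓑 with μ(T∖T₀)=0 such that for all t₁,…,t_k ∈ T₀ the random vector (X^n_{t₁},…,X^n_{t_k}) converges in probability to (X^0_{t₁},…,X^0_{t_k}). Then for every bounded real random variable Y on Ω and every natural number l, E[Y·(I(X^n,c^h))^l] → E[Y·(I(X^0,c^h))^l] as n → ∞. -/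
open MeasureTheory Filter Topology

/-! Since `|c^h| ≤ h`, dominated convergence along almost surely convergent subsequences turns
`X^n_t → X^0_t` in probability into `c^h_t(·, X^n_t) → c^h_t(·, X^0_t)` in `L¹(P)` for almost every
`t`. The `L¹(P)`-distances are at most `2 h_t`, so integrating over `t` gives convergence in
`L¹(P ⊗ μ)`, whence `I(X^n, c^h) → I(X^0, c^h)` in `L¹(P)` and so in probability. All these
functionals take values in a fixed compact interval, on which `x ↦ x ^ l` is bounded and continuous,
and a last dominated convergence yields the claim. -/

section DominatedConvergence

variable {α β ι E F : Type*} [MeasurableSpace α] [MeasurableSpace β]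
  [NormedAddCommGroup F] {μ : Measure α} {ν : Measure β} {u : Filter ι}

theorem tendsto_integral_comp_of_tendstoInMeasure [u.IsCountablyGenerated]
    [PseudoEMetricSpace E] [NormedSpace ℝ F]
    {f : ι → α → E} {f' : α → E} {G : α → E → F} {bound : α → ℝ}
    (hf : TendstoInMeasure μ f u f') (hG : ∀ᵐ a ∂μ, ContinuousAt (G a) (f' a))
    (hGf : ∀ i, AEStronglyMeasurable (fun a => G a (f i a)) μ)
    (hbound : Integrable bound μ) (hle : ∀ i, ∀ᵐ a ∂μ, ‖G a (f i a)‖ ≤ bound a) :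
    Tendsto (fun i => ∫ a, G a (f i a) ∂μ) u (𝓝 (∫ a, G a (f' a) ∂μ)) := by
  refine tendsto_of_subseq_tendsto fun ns hns => ?_
  obtain ⟨ms, -, hae⟩ := (hf.comp hns).exists_seq_tendsto_ae
  refine ⟨ms, tendsto_integral_of_dominated_convergence bound (fun _ => hGf _) hbound
    (fun _ => hle _) ?_⟩
  filter_upwards [hae, hG] with a ha hGa using hGa.tendsto.comp ha

theorem tendsto_integral_norm_comp_sub_of_tendstoInMeasure [u.IsCountablyGenerated]
    [PseudoEMetricSpace E] {f : ι → α → E} {f' : α → E} {G : α → E → F} {bound : α → ℝ}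
    (hf : TendstoInMeasure μ f u f') (hG : ∀ᵐ a ∂μ, ContinuousAt (G a) (f' a))
    (hsub : ∀ i, AEStronglyMeasurable (fun a => G a (f i a) - G a (f' a)) μ)
    (hbound : Integrable bound μ)
    (hle : ∀ i, ∀ᵐ a ∂μ, ‖G a (f i a) - G a (f' a)‖ ≤ bound a) :
    Tendsto (fun i => ∫ a, ‖G a (f i a) - G a (f' a)‖ ∂μ) u (𝓝 0) := by
  have hcont : ∀ᵐ a ∂μ, ContinuousAt (fun s => ‖G a s - G a (f' a)‖) (f' a) :=
    hG.mono fun a ha => (ha.sub continuousAt_const).norm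
  simpa only [sub_self, norm_zero, integral_zero] using
    tendsto_integral_comp_of_tendstoInMeasure (G := fun a s => ‖G a s - G a (f' a)‖) hf hcont
      (fun i => (hsub i).norm) hbound fun i => by simpa only [norm_norm] using hle i

theorem eLpNorm_one_integral_prod_le [NormedSpace ℝ F] [SFinite ν] {f : α × β → F}
    (hf : AEStronglyMeasurable f (μ.prod ν)) :
    eLpNorm (fun x => ∫ y, f (x, y) ∂ν) 1 μ ≤ eLpNorm f 1 (μ.prod ν) := by
  rw [eLpNorm_one_eq_lintegral_enorm, eLpNorm_one_eq_lintegral_enorm, lintegral_prod _ hf.enorm]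
  exact lintegral_mono fun x => enorm_integral_le_lintegral_enorm _

theorem tendstoInMeasure_integral_prod [NormedSpace ℝ F] [SFinite μ] [SFinite ν]
    {f : ι → α × β → F} {f' : α × β → F}
    (hf : ∀ i, Integrable (f i) (μ.prod ν)) (hf' : Integrable f' (μ.prod ν))
    (hlim : Tendsto (fun i => eLpNorm (f i - f') 1 (μ.prod ν)) u (𝓝 0)) :
    TendstoInMeasure μ (fun i x => ∫ y, f i (x, y) ∂ν) u (fun x => ∫ y, f' (x, y) ∂ν) := by
  refine tendstoInMeasure_of_tendsto_eLpNorm one_ne_zero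
    (fun i => (hf i).integral_prod_left.aestronglyMeasurable)
    hf'.integral_prod_left.aestronglyMeasurable
    (tendsto_of_tendsto_of_tendsto_of_le_of_le tendsto_const_nhds hlim (fun _ => zero_le) ?_)
  intro i
  have hsub : (fun x => ∫ y, f i (x, y) ∂ν) - (fun x => ∫ y, f' (x, y) ∂ν)
      =ᵐ[μ] fun x => ∫ y, (f i - f') (x, y) ∂ν := by
    filter_upwards [(hf i).prod_right_ae, hf'.prod_right_ae] with x hx hx'
    exact (integral_sub hx hx').symm
  exact (eLpNorm_congr_ae hsub).trans_le
    (eLpNorm_one_integral_prod_le ((hf i).sub hf').aestronglyMeasurable)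

theorem tendsto_eLpNorm_one_prod_of_dominated [SFinite μ] [SFinite ν] [u.IsCountablyGenerated]
    {f : ι → α × β → F} {bound : β → ℝ} (hf : ∀ i, Integrable (f i) (μ.prod ν))
    (hbound : Integrable bound ν) (hle : ∀ i, ∀ᵐ y ∂ν, ∫ x, ‖f i (x, y)‖ ∂μ ≤ bound y)
    (hlim : ∀ᵐ y ∂ν, Tendsto (fun i => ∫ x, ‖f i (x, y)‖ ∂μ) u (𝓝 0)) :
    Tendsto (fun i => eLpNorm (f i) 1 (μ.prod ν)) u (𝓝 0) := by
  have hslices : Tendsto (fun i => ∫ y, ∫ x, ‖f i (x, y)‖ ∂μ ∂ν) u (𝓝 (∫ _, 0 ∂ν)) := by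
    refine tendsto_integral_filter_of_dominated_convergence bound
      (.of_forall fun i => (hf i).integral_norm_prod_right.aestronglyMeasurable)
      (.of_forall fun i => ?_) hbound hlim
    filter_upwards [hle i] with y hy
    rwa [Real.norm_of_nonneg (integral_nonneg fun _ => norm_nonneg _)]
  have hofReal (i : ι) : eLpNorm (f i) 1 (μ.prod ν)
      = ENNReal.ofReal (∫ y, ∫ x, ‖f i (x, y)‖ ∂μ ∂ν) := by
    rw [eLpNorm_one_eq_lintegral_enorm, ← ofReal_integral_norm_eq_lintegral_enorm (hf i),
      integral_prod_symm _ (hf i).norm]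
  simpa only [hofReal, integral_zero, ENNReal.ofReal_zero] using ENNReal.tendsto_ofReal hslices

end DominatedConvergence

theorem tendstoInMeasure_integral_comp {Ω T S F : Type*} [MeasurableSpace Ω] [MeasurableSpace T]
    [PseudoEMetricSpace S] [NormedAddCommGroup F] [NormedSpace ℝ F]
    {P : Measure Ω} [IsFiniteMeasure P] {μ : Measure T} [SFinite μ]
    {g : Ω → T → S → F} {X : ℕ → Ω → T → S} {X' : Ω → T → S} {h : T → ℝ}
    (hX : ∀ n, AEStronglyMeasurable (fun p : Ω × T => g p.1 p.2 (X n p.1 p.2)) (P.prod μ))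
    (hX' : AEStronglyMeasurable (fun p : Ω × T => g p.1 p.2 (X' p.1 p.2)) (P.prod μ))
    (hg : ∀ᵐ t ∂μ, ∀ᵐ ω ∂P, ContinuousAt (g ω t) (X' ω t))
    (hle : ∀ ω t s, ‖g ω t s‖ ≤ h t) (hh : Integrable h μ)
    (hlim : ∀ᵐ t ∂μ, TendstoInMeasure P (fun n ω => X n ω t) atTop (fun ω => X' ω t)) :
    TendstoInMeasure P (fun n ω => ∫ t, g ω t (X n ω t) ∂μ) atTop
      (fun ω => ∫ t, g ω t (X' ω t) ∂μ) := by
  have hX_int (n : ℕ) : Integrable (fun p : Ω × T => g p.1 p.2 (X n p.1 p.2)) (P.prod μ) :=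
    (hh.comp_snd P).mono' (hX n) (.of_forall fun p => hle _ _ _)
  have hX'_int : Integrable (fun p : Ω × T => g p.1 p.2 (X' p.1 p.2)) (P.prod μ) :=
    (hh.comp_snd P).mono' hX' (.of_forall fun p => hle _ _ _)
  have hle_sub (n : ℕ) (ω : Ω) (t : T) : ‖g ω t (X n ω t) - g ω t (X' ω t)‖ ≤ h t + h t :=
    norm_sub_le_of_le (hle ω t _) (hle ω t _)
  suffices hL1 : Tendsto (fun n => eLpNorm ((fun p : Ω × T => g p.1 p.2 (X n p.1 p.2))
      - fun p => g p.1 p.2 (X' p.1 p.2)) 1 (P.prod μ)) atTop (𝓝 0) from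
    (tendstoInMeasure_integral_prod hX_int hX'_int hL1 :)
  refine tendsto_eLpNorm_one_prod_of_dominated (bound := fun t => P.real Set.univ * (h t + h t))
    (fun n => (hX_int n).sub hX'_int) ((hh.add hh).const_mul _)
    (fun n => .of_forall fun t => ?_) ?_
  · calc ∫ ω, ‖g ω t (X n ω t) - g ω t (X' ω t)‖ ∂P
        ≤ ∫ _, h t + h t ∂P :=
          integral_mono_of_nonneg (.of_forall fun _ => norm_nonneg _) (integrable_const _)
            (.of_forall fun ω => hle_sub n ω t)
      _ = P.real Set.univ * (h t + h t) := by rw [integral_const, smul_eq_mul]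
  · have hmeas : ∀ᵐ t ∂μ, ∀ n,
        AEStronglyMeasurable (fun ω => g ω t (X n ω t) - g ω t (X' ω t)) P :=
      ae_all_iff.2 fun n => ((hX n).sub hX').prodMk_right
    filter_upwards [hlim, hg, hmeas] with t hlim_t hg_t hmeas_t
    exact tendsto_integral_norm_comp_sub_of_tendstoInMeasure (G := fun ω s => g ω t s) hlim_t hg_t
      hmeas_t (integrable_const (h t + h t)) fun n => .of_forall fun ω => hle_sub n ω t

theorem abs_max_neg_min_le_abs {R : Type*} [AddCommGroup R] [LinearOrder R] [IsOrderedAddMonoid R]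
    (a x : R) : |max (-a) (min a x)| ≤ |a| :=
  abs_le.2 ⟨(neg_abs_le_neg a).trans (le_max_left _ _),
    max_le (neg_le_abs a) ((min_le_left _ _).trans (le_abs_self a))⟩

theorem tendstoInMeasure_apply {α ι κ : Type*} [MeasurableSpace α] {μ : Measure α}
    {u : Filter ι} [Fintype κ] {E : κ → Type*} [∀ k, PseudoEMetricSpace (E k)]
    {f : ι → α → ∀ k, E k} {f' : α → ∀ k, E k} (hf : TendstoInMeasure μ f u f') (k : κ) :
    TendstoInMeasure μ (fun i a => f i a k) u (fun a => f' a k) := fun ε hε =>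
  tendsto_of_tendsto_of_tendsto_of_le_of_le tendsto_const_nhds (hf ε hε) (fun _ => zero_le)
    fun i => measure_mono fun a (ha : ε ≤ edist (f i a k) (f' a k)) =>
      ha.trans (edist_le_pi_edist (f i a) (f' a) k)

theorem tendsto_integral_mul_comp_of_tendstoInMeasure {α ι E : Type*} [MeasurableSpace α]
    [NormedAddCommGroup E] [ProperSpace E] {μ : Measure α} {u : Filter ι}
    [u.IsCountablyGenerated] {f : ι → α → E} {f' : α → E} {Y : α → ℝ} {φ : E → ℝ} {B : ℝ}
    (hY : Integrable Y μ) (hφ : Continuous φ)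
    (hf : ∀ i, AEStronglyMeasurable (f i) μ) (hB : ∀ i, ∀ᵐ a ∂μ, ‖f i a‖ ≤ B)
    (hlim : TendstoInMeasure μ f u f') :
    Tendsto (fun i => ∫ a, Y a * φ (f i a) ∂μ) u (𝓝 (∫ a, Y a * φ (f' a) ∂μ)) := by
  obtain ⟨M, hM⟩ := (isCompact_closedBall (0 : E) B).exists_bound_of_continuousOn hφ.continuousOn
  refine tendsto_integral_comp_of_tendstoInMeasure (G := fun a x => Y a * φ x) hlim
    (.of_forall fun a => (hφ.const_mul (Y a)).continuousAt)
    (fun i => hY.aestronglyMeasurable.mul (hφ.comp_aestronglyMeasurable (hf i)))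
    (hY.norm.mul_const M) fun i => ?_
  filter_upwards [hB i] with a ha
  rw [norm_mul]
  gcongr
  exact hM _ (mem_closedBall_zero_iff.2 ha)

theorem convergence_moments_truncated_integrals_general
    {Ω T S : Type*} [MeasurableSpace Ω] [MeasurableSpace T]
    [PseudoEMetricSpace S] [MeasurableSpace S]
    (P : Measure Ω) [IsFiniteMeasure P] (μ : Measure T) [SFinite μ]
    (c : Ω → T → S → ℝ) (hc_meas : Measurable fun p : Ω × T × S => c p.1 p.2.1 p.2.2)
    (hc_cont : ∀ ω t, Continuous fun s => c ω t s)
    (X : ℕ → Ω → T → S) (hX_meas : ∀ n, Measurable fun p : Ω × T => X n p.1 p.2)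
    (X' : Ω → T → S) (hX'_meas : Measurable fun p : Ω × T => X' p.1 p.2)
    (h : T → ℝ) (hh_int : Integrable h μ)
    (hlim : ∀ᵐ t ∂μ, TendstoInMeasure P (fun n ω => X n ω t) atTop (fun ω => X' ω t))
    (Y : Ω → ℝ) (hY : Integrable Y P) (φ : ℝ → ℝ) (hφ : Continuous φ) :
    Tendsto
      (fun n => ∫ ω, Y ω * φ (∫ t, max (-(h t)) (min (h t) (c ω t (X n ω t))) ∂μ) ∂P) atTop
      (𝓝 (∫ ω, Y ω * φ (∫ t, max (-(h t)) (min (h t) (c ω t (X' ω t))) ∂μ) ∂P)) := by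
  let g : Ω → T → S → ℝ := fun ω t s => max (-(h t)) (min (h t) (c ω t s))
  have hg_le (ω : Ω) (t : T) (s : S) : ‖g ω t s‖ ≤ |h t| := abs_max_neg_min_le_abs _ _
  have hg_cont (ω : Ω) (t : T) : Continuous (g ω t) :=
    continuous_const.max (continuous_const.min (hc_cont ω t))
  have hg_meas {Z : Ω → T → S} (hZ : Measurable fun p : Ω × T => Z p.1 p.2) :
      AEStronglyMeasurable (fun p : Ω × T => g p.1 p.2 (Z p.1 p.2)) (P.prod μ) := by
    have hh_meas : AEStronglyMeasurable (fun p : Ω × T => h p.2) (P.prod μ) :=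
      hh_int.aestronglyMeasurable.comp_snd
    have hcZ : Measurable fun p : Ω × T => c p.1 p.2 (Z p.1 p.2) :=
      hc_meas.comp (measurable_fst.prodMk (measurable_snd.prodMk hZ))
    exact hh_meas.neg.sup (hh_meas.inf hcZ.aestronglyMeasurable)
  have hI_le (n : ℕ) (ω : Ω) : |∫ t, g ω t (X n ω t) ∂μ| ≤ ∫ t, |h t| ∂μ :=
    norm_integral_le_of_norm_le hh_int.abs (.of_forall fun t => hg_le _ _ _)
  have hI_meas (n : ℕ) : AEStronglyMeasurable (fun ω => ∫ t, g ω t (X n ω t) ∂μ) P :=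
    (hg_meas (hX_meas n)).integral_prod_right'
  have hI_lim : TendstoInMeasure P (fun n ω => ∫ t, g ω t (X n ω t) ∂μ) atTop
      (fun ω => ∫ t, g ω t (X' ω t) ∂μ) :=
    tendstoInMeasure_integral_comp (fun n => hg_meas (hX_meas n)) (hg_meas hX'_meas)
      (.of_forall fun t => .of_forall fun ω => (hg_cont ω t).continuousAt) hg_le hh_int.abs hlim
  exact tendsto_integral_mul_comp_of_tendstoInMeasure hY hφ hI_meas
    (fun n => .of_forall (hI_le n)) hI_lim

/-- **Convergence of moments of truncated integral functionals.**
If the jointly measurable processes `X^n` converge to `X^0` in probability in finite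
dimension, then for the truncated cost `c^h_t(ω,x) = max (−h_t) (min h_t (c_t(ω,x)))`
with `0 ≤ h ∈ L¹(μ)`, for every bounded random variable `Y` and every `l : ℕ`,
`E[Y (I(X^n, c^h))^l] → E[Y (I(X^0, c^h))^l]`. -/
theorem convergence_moments_truncated_integrals
    {Ω : Type*} [MeasurableSpace Ω] (P : Measure Ω) [IsProbabilityMeasure P]
    {T : Type*} [MeasurableSpace T] (μ : Measure T) [SigmaFinite μ]
    {S : Type*} [MetricSpace S] [CompleteSpace S] [TopologicalSpace.SeparableSpace S]
    [MeasurableSpace S] [BorelSpace S]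
    (c : Ω → T → S → ℝ)
    (hc_meas : Measurable fun p : Ω × T × S => c p.1 p.2.1 p.2.2)
    (hc_cont : ∀ ω t, Continuous fun s => c ω t s)
    (X : ℕ → Ω → T → S)
    (hX_meas : ∀ n, Measurable fun p : Ω × T => X n p.1 p.2)
    (h : T → ℝ) (hh_int : Integrable h μ) (hh_nonneg : ∀ t, 0 ≤ h t)
    -- convergence in probability in finite dimension
    (hfd : ∃ T₀ : Set T, MeasurableSet T₀ ∧ μ T₀ᶜ = 0 ∧
      ∀ (k : ℕ) (t : Fin k → T), (∀ i, t i ∈ T₀) →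
        TendstoInMeasure P (fun n ω => fun i => X n ω (t i)) atTop
          (fun ω => fun i => X 0 ω (t i)))
    (Y : Ω → ℝ) (hY_meas : Measurable Y) (hY_bdd : ∃ C : ℝ, ∀ ω, |Y ω| ≤ C)
    (l : ℕ) :
    Tendsto
      (fun n => ∫ ω, Y ω *
        (∫ t, max (-(h t)) (min (h t) (c ω t (X n ω t))) ∂μ) ^ l ∂P) atTop
      (𝓝 (∫ ω, Y ω *
        (∫ t, max (-(h t)) (min (h t) (c ω t (X 0 ω t))) ∂μ) ^ l ∂P)) := by
  obtain ⟨T₀, -, hT₀, hconv⟩ := hfd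
  obtain ⟨C, hC⟩ := hY_bdd
  have hmarginal : ∀ᵐ t ∂μ, TendstoInMeasure P (fun n ω => X n ω t) atTop (fun ω => X 0 ω t) := by
    filter_upwards [show ∀ᵐ t ∂μ, t ∈ T₀ from hT₀] with t ht
    exact tendstoInMeasure_apply (hconv 1 (fun _ => t) fun _ => ht) 0
  exact convergence_moments_truncated_integrals_general P μ c hc_meas hc_cont X hX_meas
    (X 0) (hX_meas 0) h hh_int hmarginal Y
    (.of_bound hY_meas.aestronglyMeasurable C (.of_forall hC)) (· ^ l) (continuous_pow l)
end

section
/- Let a be a d×d real symmetric positive semidefinite matrix, Q and D d×d real symmetric positive definite matrices, r > 0, l > 0, and let G be a d×d real symmetric positive definite matrix with G Q⁻¹ G = r·l·D. Let μ be a Borel probability measure on ℝ^d × ℝ^d such that ∫ (r·x^T D x + l·u^T Q u) μ(dx,du) < ∞ and such that for every f ∈ C²_c(ℝ^d): ∫_{ℝ^d×ℝ^d} [ ½ Σ_{i,j} a_{ij} ∂²_{ij} f(x) + u·∇f(x) ] μ(dx,du) = 0. Then ∫_{ℝ^d×ℝ^d} (r·x^T D x + l·u^T Q u) μ(dx,du)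 ≥ Tr(aG). -/
/-!
With `P = l • Q`, the relation `G Q⁻¹ G = r l D` gives `r xᵀDx = (Gx)ᵀ P⁻¹ (Gx)`, and completing the
square turns the cost into `(u + P⁻¹Gx)ᵀ P (u + P⁻¹Gx) - 2 u·Gx`. For a probability measure `μ`, the
constraint for `f(x) = xᵀGx` reads `Tr(aG) + 2 ∫ u·Gx dμ = 0`, so the total cost is `Tr(aG)` plus
the integral of the square. This `f` is not compactly supported; it is replaced by `c⁻² F(cx)`,
with `c → 0` and `F` a truncation of `f`. Since `f` is homogeneous of degree two, these functions
agree with `f` on larger and larger sets, while their second derivatives are bounded and their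
gradients are bounded by a multiple of `‖Gx‖`, both uniformly in `c`. As `‖Gx‖ ‖u‖` is at most a
multiple of the cost, dominated convergence applies.
-/

open MeasureTheory Matrix

/-- Second partial derivative `∂²_{ij} f` of a function on `ℝ^d`. -/
noncomputable def secondPartial {d : ℕ} (f : (Fin d → ℝ) → ℝ) (i j : Fin d)
    (x : Fin d → ℝ) : ℝ :=
  fderiv ℝ (fun y => fderiv ℝ f y (Pi.single j 1)) x (Pi.single i 1)

open Filter Topology

section Matrices

variable {n : Type*} [Fintype n]

lemma abs_dotProduct_le_card_mul (x y : n → ℝ) :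
    |x ⬝ᵥ y| ≤ Fintype.card n * (‖x‖ * ‖y‖) := by
  calc |x ⬝ᵥ y| ≤ ∑ i, |x i * y i| := Finset.abs_sum_le_sum_abs _ _
    _ ≤ ∑ _i : n, ‖x‖ * ‖y‖ := by
        gcongr with i
        rw [abs_mul]
        gcongr
        exacts [norm_le_pi_norm x i, norm_le_pi_norm y i]
    _ = Fintype.card n * (‖x‖ * ‖y‖) := by simp

lemma exists_pos_mul_sq_norm_le_of_posDef {M : Matrix n n ℝ} (hM : M.PosDef) :
    ∃ c : ℝ, 0 < c ∧ ∀ x : n → ℝ, c * ‖x‖ ^ 2 ≤ x ⬝ᵥ (M *ᵥ x) := by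
  have hcont : Continuous fun x : n → ℝ => x ⬝ᵥ (M *ᵥ x) := by fun_prop
  have hpos : ∀ x ∈ Metric.sphere (0 : n → ℝ) 1, 0 < x ⬝ᵥ (M *ᵥ x) := fun x hx => by
    simpa using hM.dotProduct_mulVec_pos (ne_zero_of_mem_unit_sphere ⟨x, hx⟩)
  obtain ⟨c, hc, hsphere⟩ :=
    (isCompact_sphere (0 : n → ℝ) 1).exists_forall_le' hcont.continuousOn hpos
  refine ⟨c, hc, fun x => ?_⟩
  rcases eq_or_ne x 0 with rfl | hx
  · simp
  have hnorm : ‖x‖ ≠ 0 := norm_ne_zero_iff.mpr hx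
  have hunit := hsphere (‖x‖⁻¹ • x) (by simp [norm_smul, hnorm])
  calc c * ‖x‖ ^ 2 ≤ ((‖x‖⁻¹ • x) ⬝ᵥ (M *ᵥ (‖x‖⁻¹ • x))) * ‖x‖ ^ 2 := by gcongr
    _ = x ⬝ᵥ (M *ᵥ x) := by
        simp only [mulVec_smul, smul_dotProduct, dotProduct_smul, smul_eq_mul]
        field_simp

lemma exists_norm_mul_norm_le_of_posDef {M N : Matrix n n ℝ} (hM : M.PosDef) (hN : N.PosDef) :
    ∃ C : ℝ, ∀ y u : n → ℝ, ‖y‖ * ‖u‖ ≤ C * (y ⬝ᵥ (M *ᵥ y) + u ⬝ᵥ (N *ᵥ u)) := by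
  obtain ⟨b, hb, hbM⟩ := exists_pos_mul_sq_norm_le_of_posDef hM
  obtain ⟨c, hc, hcN⟩ := exists_pos_mul_sq_norm_le_of_posDef hN
  have hmin : 0 < min b c := lt_min hb hc
  refine ⟨(2 * min b c)⁻¹, fun y u => ?_⟩
  rw [inv_mul_eq_div, le_div_iff₀ (mul_pos two_pos hmin)]
  calc ‖y‖ * ‖u‖ * (2 * min b c) = min b c * (2 * ‖y‖ * ‖u‖) := by ring
    _ ≤ min b c * (‖y‖ ^ 2 + ‖u‖ ^ 2) := by gcongr; exact two_mul_le_add_sq _ _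
    _ = min b c * ‖y‖ ^ 2 + min b c * ‖u‖ ^ 2 := mul_add _ _ _
    _ ≤ b * ‖y‖ ^ 2 + c * ‖u‖ ^ 2 := by gcongr; exacts [min_le_left b c, min_le_right b c]
    _ ≤ y ⬝ᵥ (M *ᵥ y) + u ⬝ᵥ (N *ᵥ u) := add_le_add (hbM y) (hcN u)

lemma dotProduct_mulVec_comm_of_isSymm {R : Type*} [CommSemiring R] {M : Matrix n n R}
    (hM : M.IsSymm) (x y : n → R) : x ⬝ᵥ (M *ᵥ y) = y ⬝ᵥ (M *ᵥ x) := by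
  rw [dotProduct_mulVec, ← mulVec_transpose, hM.eq, dotProduct_comm]

lemma mulVec_dotProduct_mulVec_mulVec {R : Type*} [CommSemiring R] {G : Matrix n n R}
    (hG : G.IsSymm) (M : Matrix n n R) (x : n → R) :
    (G *ᵥ x) ⬝ᵥ (M *ᵥ (G *ᵥ x)) = x ⬝ᵥ ((G * M * G) *ᵥ x) := by
  rw [dotProduct_comm, dotProduct_mulVec_comm_of_isSymm hG, mulVec_mulVec, mulVec_mulVec,
    Matrix.mul_assoc]

lemma dotProduct_mulVec_add_inv_mulVec {R : Type*} [CommRing R] [DecidableEq n]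
    {P : Matrix n n R} (hP : P.IsSymm) (hdet : IsUnit P.det) (u y : n → R) :
    (u + P⁻¹ *ᵥ y) ⬝ᵥ (P *ᵥ (u + P⁻¹ *ᵥ y))
      = y ⬝ᵥ (P⁻¹ *ᵥ y) + u ⬝ᵥ (P *ᵥ u) + 2 * (u ⬝ᵥ y) := by
  have hcancel : P *ᵥ (P⁻¹ *ᵥ y) = y := by
    rw [mulVec_mulVec, mul_nonsing_inv _ hdet, one_mulVec]
  have hcross : (P⁻¹ *ᵥ y) ⬝ᵥ (P *ᵥ u) = u ⬝ᵥ y := by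
    rw [dotProduct_mulVec_comm_of_isSymm hP, hcancel]
  rw [mulVec_add, hcancel, add_dotProduct, dotProduct_add, dotProduct_add, hcross,
    dotProduct_comm (P⁻¹ *ᵥ y) y]
  ring

end Matrices

variable {d : ℕ}

lemma secondPartial_congr {f g : (Fin d → ℝ) → ℝ} {x : Fin d → ℝ} (h : f =ᶠ[𝓝 x] g)
    (i j : Fin d) : secondPartial f i j x = secondPartial g i j x := by
  have hpartial : (fun y => fderiv ℝ f y (Pi.single j 1))
      =ᶠ[𝓝 x] fun y => fderiv ℝ g y (Pi.single j 1) :=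
    h.fderiv.fun_comp fun L => L (Pi.single j 1)
  rw [secondPartial, secondPartial, hpartial.fderiv_eq]

lemma continuous_secondPartial {f : (Fin d → ℝ) → ℝ} (hf : ContDiff ℝ 2 f) (i j : Fin d) :
    Continuous (secondPartial f i j) := by
  have hpartial : ContDiff ℝ 1 fun y => fderiv ℝ f y (Pi.single j 1) :=
    (hf.fderiv_right (by norm_num)).clm_apply contDiff_const
  exact (hpartial.continuous_fderiv (by norm_num)).clm_apply continuous_const

/-- The second-order operator `f ↦ ½ ∑ aᵢⱼ ∂²ᵢⱼ f`, the generator of the uncontrolled diffusion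
with covariance `a`. -/
noncomputable def diffusionOperator (a : Matrix (Fin d) (Fin d) ℝ) (f : (Fin d → ℝ) → ℝ)
    (x : Fin d → ℝ) : ℝ :=
  (1 / 2 : ℝ) * ∑ i, ∑ j, a i j * secondPartial f i j x

/-- The generator of the controlled diffusion, evaluated at a pair `p = (x, u)` of a state and a
control; the control acts as a drift. -/
noncomputable def controlledGenerator (a : Matrix (Fin d) (Fin d) ℝ) (f : (Fin d → ℝ) → ℝ)
    (p : (Fin d → ℝ) × (Fin d → ℝ)) : ℝ :=
  diffusionOperator a f p.1 + fderiv ℝ f p.1 p.2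

/-- The linear constraint satisfied by the occupation measures of stationary controlled diffusions
with covariance `a`. -/
def IsOccupationMeasure (a : Matrix (Fin d) (Fin d) ℝ)
    (μ : Measure ((Fin d → ℝ) × (Fin d → ℝ))) : Prop :=
  ∀ f : (Fin d → ℝ) → ℝ, ContDiff ℝ 2 f → HasCompactSupport f →
    ∫ p, controlledGenerator a f p ∂μ = 0

section Generator

variable (a : Matrix (Fin d) (Fin d) ℝ) {f g : (Fin d → ℝ) → ℝ}

lemma diffusionOperator_congr {x : Fin d → ℝ} (h : f =ᶠ[𝓝 x] g) :
    diffusionOperator a f x = diffusionOperator a g x := by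
  simp only [diffusionOperator, secondPartial_congr h]

lemma controlledGenerator_congr {p : (Fin d → ℝ) × (Fin d → ℝ)} (h : f =ᶠ[𝓝 p.1] g) :
    controlledGenerator a f p = controlledGenerator a g p := by
  rw [controlledGenerator, controlledGenerator, diffusionOperator_congr a h, h.fderiv_eq]

lemma continuous_diffusionOperator (hf : ContDiff ℝ 2 f) :
    Continuous (diffusionOperator a f) := by
  have := continuous_secondPartial hf
  unfold diffusionOperator
  fun_prop

lemma continuous_controlledGenerator (hf : ContDiff ℝ 2 f) :
    Continuous (controlledGenerator a f) := by
  have hdiffusion := continuous_diffusionOperator a hf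
  have hderiv := hf.continuous_fderiv (by norm_num)
  unfold controlledGenerator
  fun_prop

lemma exists_abs_diffusionOperator_le (hf : ContDiff ℝ 2 f) (hsupp : HasCompactSupport f) :
    ∃ M : ℝ, ∀ x, |diffusionOperator a f x| ≤ M := by
  have hcompact : HasCompactSupport (diffusionOperator a f) :=
    HasCompactSupport.intro hsupp.isCompact fun x hx => by
      rw [diffusionOperator_congr a (notMem_tsupport_iff_eventuallyEq.mp hx)]
      simp [diffusionOperator, secondPartial]
  exact hcompact.exists_bound_of_continuous (continuous_diffusionOperator a hf)

end Generator

section QuadForm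

/-- The quadratic form `x ↦ xᵀGx` as a plain function, so that it can be differentiated. -/
def quadForm (G : Matrix (Fin d) (Fin d) ℝ) (x : Fin d → ℝ) : ℝ :=
  x ⬝ᵥ (G *ᵥ x)

variable (G : Matrix (Fin d) (Fin d) ℝ)

/-- The continuous bilinear form `(x, y) ↦ xᵀGy`, whose diagonal is `quadForm G`. -/
noncomputable def quadFormBilin : (Fin d → ℝ) →L[ℝ] (Fin d → ℝ) →L[ℝ] ℝ :=
  LinearMap.toContinuousBilinearMap (toLinearMap₂' ℝ G)

lemma quadFormBilin_apply (x y : Fin d → ℝ) : quadFormBilin G x y = x ⬝ᵥ (G *ᵥ y) :=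
  toLinearMap₂'_apply' G x y

lemma contDiff_quadForm {m : WithTop ℕ∞} : ContDiff ℝ m (quadForm G) := by
  unfold quadForm dotProduct mulVec dotProduct
  fun_prop

lemma fderiv_quadForm_apply (x u : Fin d → ℝ) :
    fderiv ℝ (quadForm G) x u = x ⬝ᵥ (G *ᵥ u) + u ⬝ᵥ (G *ᵥ x) := by
  have hquad : quadForm G = fun y => quadFormBilin G y y :=
    funext fun y => (quadFormBilin_apply G y y).symm
  rw [hquad, ContinuousLinearMap.fderiv_of_bilinear _ differentiableAt_fun_id
    differentiableAt_fun_id]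
  simp [quadFormBilin_apply]

lemma secondPartial_quadForm (i j : Fin d) (x : Fin d → ℝ) :
    secondPartial (quadForm G) i j x = G i j + G j i := by
  have hpartial : (fun y => fderiv ℝ (quadForm G) y (Pi.single j 1))
      = (quadFormBilin G).flip (Pi.single j 1) + quadFormBilin G (Pi.single j 1) := by
    ext y
    simp [fderiv_quadForm_apply, quadFormBilin_apply]
  rw [secondPartial, hpartial, ← FunLike.coe_add, ContinuousLinearMap.fderiv]
  simp [quadFormBilin_apply]

variable {G}

lemma fderiv_quadForm_apply_of_isSymm (hG : G.IsSymm) (x u : Fin d → ℝ) :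
    fderiv ℝ (quadForm G) x u = 2 * (u ⬝ᵥ (G *ᵥ x)) := by
  rw [fderiv_quadForm_apply, dotProduct_mulVec_comm_of_isSymm hG x u, two_mul]

lemma controlledGenerator_quadForm (a : Matrix (Fin d) (Fin d) ℝ) (hG : G.IsSymm)
    (p : (Fin d → ℝ) × (Fin d → ℝ)) :
    controlledGenerator a (quadForm G) p = (a * G).trace + 2 * (p.2 ⬝ᵥ (G *ᵥ p.1)) := by
  have hdiffusion : diffusionOperator a (quadForm G) p.1 = (a * G).trace := by
    simp only [diffusionOperator, secondPartial_quadForm, trace, diag, mul_apply, Finset.mul_sum]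
    refine Finset.sum_congr rfl fun i _ => Finset.sum_congr rfl fun j _ => ?_
    rw [hG.apply j i]
    ring
  rw [controlledGenerator, hdiffusion, fderiv_quadForm_apply_of_isSymm hG]

end QuadForm

section QuadraticRescale

/-- The rescaling `y ↦ c⁻² f (c y)`, which fixes functions homogeneous of degree two. -/
noncomputable def quadraticRescale (c : ℝ) (f : (Fin d → ℝ) → ℝ) (y : Fin d → ℝ) : ℝ :=
  c⁻¹ ^ 2 * f (c • y)

variable {c : ℝ} {f : (Fin d → ℝ) → ℝ}

lemma contDiff_quadraticRescale {m : WithTop ℕ∞} (hf : ContDiff ℝ m f) :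
    ContDiff ℝ m (quadraticRescale c f) := by
  unfold quadraticRescale
  fun_prop

lemma hasCompactSupport_quadraticRescale (hc : c ≠ 0) (hf : HasCompactSupport f) :
    HasCompactSupport (quadraticRescale c f) :=
  (hf.comp_smul hc).mul_left (f := fun _ => c⁻¹ ^ 2)

lemma quadraticRescale_quadForm (hc : c ≠ 0) (G : Matrix (Fin d) (Fin d) ℝ) :
    quadraticRescale c (quadForm G) = quadForm G := by
  funext y
  simp only [quadraticRescale, quadForm, mulVec_smul, smul_dotProduct, dotProduct_smul,
    smul_eq_mul]
  field_simp

lemma fderiv_quadraticRescale (hc : c ≠ 0) (f : (Fin d → ℝ) → ℝ) (x : Fin d → ℝ) :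
    fderiv ℝ (quadraticRescale c f) x = c⁻¹ • fderiv ℝ f (c • x) := by
  change fderiv ℝ (c⁻¹ ^ 2 • fun y => f (c • y)) x = _
  rw [fderiv_const_smul_field, Pi.smul_apply, fderiv_comp_smul, smul_smul]
  congr 1
  field_simp

lemma secondPartial_quadraticRescale (hc : c ≠ 0) (f : (Fin d → ℝ) → ℝ) (i j : Fin d)
    (x : Fin d → ℝ) :
    secondPartial (quadraticRescale c f) i j x = secondPartial f i j (c • x) := by
  simp only [secondPartial, fderiv_quadraticRescale hc]
  change fderiv ℝ (c⁻¹ • fun y => fderiv ℝ f (c • y) (Pi.single j 1)) x _ = _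
  rw [fderiv_const_smul_field, Pi.smul_apply,
    fderiv_comp_smul (f := fun y => fderiv ℝ f y (Pi.single j 1)), smul_smul,
    inv_mul_cancel₀ hc, one_smul]

lemma controlledGenerator_quadraticRescale (a : Matrix (Fin d) (Fin d) ℝ) (hc : c ≠ 0)
    (f : (Fin d → ℝ) → ℝ) (p : (Fin d → ℝ) × (Fin d → ℝ)) :
    controlledGenerator a (quadraticRescale c f) p
      = diffusionOperator a f (c • p.1) + c⁻¹ * fderiv ℝ f (c • p.1) p.2 := by
  simp only [controlledGenerator, diffusionOperator, secondPartial_quadraticRescale hc,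
    fderiv_quadraticRescale hc, _root_.smul_apply, smul_eq_mul]

lemma eventually_quadraticRescale_eventuallyEq_quadForm {G : Matrix (Fin d) (Fin d) ℝ}
    (h : f =ᶠ[𝓝 0] quadForm G) (x : Fin d → ℝ) :
    ∀ᶠ c in 𝓝[≠] (0 : ℝ), quadraticRescale c f =ᶠ[𝓝 x] quadForm G := by
  have hscale : Tendsto (fun c : ℝ => c • x) (𝓝[≠] 0) (𝓝 0) :=
    ((continuous_id.smul continuous_const).tendsto' 0 0 (zero_smul ℝ x)).mono_left
      nhdsWithin_le_nhds
  filter_upwards [hscale.eventually h.eventuallyEq_nhds, self_mem_nhdsWithin] with c hfG hc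
  have hcomp : ∀ᶠ y in 𝓝 x, f (c • y) = quadForm G (c • y) :=
    (continuous_const_smul c).continuousAt.eventually hfG
  filter_upwards [hcomp] with y hy
  rw [← congrFun (quadraticRescale_quadForm hc G) y, quadraticRescale, quadraticRescale, hy]

end QuadraticRescale

section Truncation

/-- A smooth bump function equal to one on the unit ball. -/
def unitCutoff (d : ℕ) : ContDiffBump (0 : Fin d → ℝ) :=
  ⟨1, 2, one_pos, one_lt_two⟩

/-- The quadratic form of `G`, smoothly cut off to have compact support. -/
noncomputable def truncatedQuadForm (G : Matrix (Fin d) (Fin d) ℝ) (x : Fin d → ℝ) : ℝ :=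
  unitCutoff d x * quadForm G x

variable (G : Matrix (Fin d) (Fin d) ℝ)

lemma contDiff_truncatedQuadForm {m : ℕ∞} : ContDiff ℝ m (truncatedQuadForm G) :=
  (unitCutoff d).contDiff.mul (contDiff_quadForm G)

lemma hasCompactSupport_truncatedQuadForm : HasCompactSupport (truncatedQuadForm G) :=
  (unitCutoff d).hasCompactSupport.mul_right

lemma truncatedQuadForm_eventuallyEq : truncatedQuadForm G =ᶠ[𝓝 0] quadForm G := by
  filter_upwards [(unitCutoff d).eventuallyEq_one] with x hx
  rw [truncatedQuadForm, hx, Pi.one_apply, one_mul]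

lemma fderiv_truncatedQuadForm_apply (x u : Fin d → ℝ) :
    fderiv ℝ (truncatedQuadForm G) x u
      = unitCutoff d x * fderiv ℝ (quadForm G) x u
        + quadForm G x * fderiv ℝ (unitCutoff d) x u := by
  have hcutoff : DifferentiableAt ℝ (unitCutoff d) x :=
    (unitCutoff d).contDiffAt.differentiableAt one_ne_zero
  have hquad : DifferentiableAt ℝ (quadForm G) x :=
    (contDiff_quadForm G).contDiffAt.differentiableAt one_ne_zero
  change fderiv ℝ (fun y => unitCutoff d y * quadForm G y) x u = _
  rw [fderiv_fun_mul hcutoff hquad]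
  rfl

lemma exists_norm_mul_norm_fderiv_unitCutoff_le (d : ℕ) :
    ∃ L : ℝ, ∀ x, ‖x‖ * ‖fderiv ℝ (unitCutoff d) x‖ ≤ L := by
  have hcont : Continuous fun x => ‖x‖ • fderiv ℝ (unitCutoff d) x :=
    continuous_norm.smul ((unitCutoff d).contDiff.continuous_fderiv one_ne_zero)
  obtain ⟨L, hL⟩ :=
    (((unitCutoff d).hasCompactSupport.fderiv ℝ).smul_left (f := norm)).exists_bound_of_continuous
      hcont
  exact ⟨L, fun x => by simpa [norm_smul] using hL x⟩

variable {G}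

lemma exists_abs_fderiv_truncatedQuadForm_le (hG : G.IsSymm) :
    ∃ K : ℝ, ∀ x u, |fderiv ℝ (truncatedQuadForm G) x u| ≤ K * (‖G *ᵥ x‖ * ‖u‖) := by
  obtain ⟨L, hL⟩ := exists_norm_mul_norm_fderiv_unitCutoff_le d
  refine ⟨d * (2 + L), fun x u => ?_⟩
  have hdot (v w : Fin d → ℝ) : |v ⬝ᵥ w| ≤ d * (‖v‖ * ‖w‖) := by
    simpa using abs_dotProduct_le_card_mul v w
  have hmain : |unitCutoff d x * fderiv ℝ (quadForm G) x u| ≤ d * 2 * (‖G *ᵥ x‖ * ‖u‖) := by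
    rw [fderiv_quadForm_apply_of_isSymm hG, abs_mul, abs_mul, abs_two,
      abs_of_nonneg (unitCutoff d).nonneg]
    calc unitCutoff d x * (2 * |u ⬝ᵥ (G *ᵥ x)|)
        ≤ 1 * (2 * (d * (‖u‖ * ‖G *ᵥ x‖))) := by
          gcongr
          exacts [(unitCutoff d).le_one, hdot _ _]
      _ = d * 2 * (‖G *ᵥ x‖ * ‖u‖) := by ring
  have hcutoff : |quadForm G x * fderiv ℝ (unitCutoff d) x u| ≤ d * L * (‖G *ᵥ x‖ * ‖u‖) := by
    rw [abs_mul]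
    calc |quadForm G x| * |fderiv ℝ (unitCutoff d) x u|
        ≤ d * (‖x‖ * ‖G *ᵥ x‖) * (‖fderiv ℝ (unitCutoff d) x‖ * ‖u‖) := by
          gcongr
          exacts [hdot _ _, (fderiv ℝ (unitCutoff d) x).le_opNorm u]
      _ = d * (‖x‖ * ‖fderiv ℝ (unitCutoff d) x‖) * (‖G *ᵥ x‖ * ‖u‖) := by ring
      _ ≤ d * L * (‖G *ᵥ x‖ * ‖u‖) := by
          gcongr
          exact hL x
  calc |fderiv ℝ (truncatedQuadForm G) x u|
      ≤ d * 2 * (‖G *ᵥ x‖ * ‖u‖) + d * L * (‖G *ᵥ x‖ * ‖u‖) := by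
        rw [fderiv_truncatedQuadForm_apply]
        exact (abs_add_le _ _).trans (add_le_add hmain hcutoff)
    _ = d * (2 + L) * (‖G *ᵥ x‖ * ‖u‖) := by ring

lemma exists_abs_controlledGenerator_rescale_truncatedQuadForm_le
    (a : Matrix (Fin d) (Fin d) ℝ) (hG : G.IsSymm) :
    ∃ M K : ℝ, ∀ c : ℝ, c ≠ 0 → ∀ p,
      |controlledGenerator a (quadraticRescale c (truncatedQuadForm G)) p|
        ≤ M + K * (‖G *ᵥ p.1‖ * ‖p.2‖) := by
  obtain ⟨M, hM⟩ := exists_abs_diffusionOperator_le a (contDiff_truncatedQuadForm G)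
    (hasCompactSupport_truncatedQuadForm G)
  obtain ⟨K, hK⟩ := exists_abs_fderiv_truncatedQuadForm_le hG
  refine ⟨M, K, fun c hc p => ?_⟩
  have hdrift : |c⁻¹ * fderiv ℝ (truncatedQuadForm G) (c • p.1) p.2|
      ≤ K * (‖G *ᵥ p.1‖ * ‖p.2‖) := by
    rw [abs_mul]
    calc |c⁻¹| * |fderiv ℝ (truncatedQuadForm G) (c • p.1) p.2|
        ≤ |c⁻¹| * (K * (‖G *ᵥ (c • p.1)‖ * ‖p.2‖)) := by gcongr; exact hK _ _
      _ = K * (‖G *ᵥ p.1‖ * ‖p.2‖) := by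
        rw [mulVec_smul, norm_smul, abs_inv, Real.norm_eq_abs]
        field_simp
  rw [controlledGenerator_quadraticRescale a hc]
  exact (abs_add_le _ _).trans (add_le_add (hM _) hdrift)

end Truncation

section OccupationMeasure

variable {a G : Matrix (Fin d) (Fin d) ℝ} {μ : Measure ((Fin d → ℝ) × (Fin d → ℝ))}

lemma integrable_dotProduct_mulVec (hint : Integrable (fun p => ‖G *ᵥ p.1‖ * ‖p.2‖) μ) :
    Integrable (fun p => p.2 ⬝ᵥ (G *ᵥ p.1)) μ := by
  refine (hint.const_mul (d : ℝ)).mono' (Continuous.aestronglyMeasurable (by fun_prop))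
    (.of_forall fun p => ?_)
  simpa [mul_comm ‖G *ᵥ p.1‖] using abs_dotProduct_le_card_mul p.2 (G *ᵥ p.1)

lemma integrable_norm_mulVec_mul_norm {P : Matrix (Fin d) (Fin d) ℝ} (hP : P.PosDef)
    (hint : Integrable
      (fun p => (G *ᵥ p.1) ⬝ᵥ (P⁻¹ *ᵥ (G *ᵥ p.1)) + p.2 ⬝ᵥ (P *ᵥ p.2)) μ) :
    Integrable (fun p => ‖G *ᵥ p.1‖ * ‖p.2‖) μ := by
  obtain ⟨C, hC⟩ := exists_norm_mul_norm_le_of_posDef hP.inv hP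
  refine (hint.const_mul C).mono' (Continuous.aestronglyMeasurable (by fun_prop))
    (.of_forall fun p => ?_)
  rw [Real.norm_of_nonneg (by positivity)]
  exact hC (G *ᵥ p.1) p.2

variable [IsFiniteMeasure μ]

theorem integral_controlledGenerator_quadForm_eq_zero (hμ : IsOccupationMeasure a μ)
    (hG : G.IsSymm) (hint : Integrable (fun p => ‖G *ᵥ p.1‖ * ‖p.2‖) μ) :
    ∫ p, controlledGenerator a (quadForm G) p ∂μ = 0 := by
  let f (c : ℝ) := quadraticRescale c (truncatedQuadForm G)
  have hsmooth (c : ℝ) : ContDiff ℝ 2 (f c) :=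
    contDiff_quadraticRescale (contDiff_truncatedQuadForm G)
  obtain ⟨M, K, hbound⟩ := exists_abs_controlledGenerator_rescale_truncatedQuadForm_le a hG
  have hlim : Tendsto (fun c => ∫ p, controlledGenerator a (f c) p ∂μ) (𝓝[≠] 0)
      (𝓝 (∫ p, controlledGenerator a (quadForm G) p ∂μ)) := by
    refine tendsto_integral_filter_of_dominated_convergence
      (fun p => M + K * (‖G *ᵥ p.1‖ * ‖p.2‖)) (.of_forall fun c => ?_) ?_
      ((integrable_const M).add (hint.const_mul K)) (.of_forall fun p => ?_)
    · exact (continuous_controlledGenerator a (hsmooth c)).aestronglyMeasurable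
    · filter_upwards [self_mem_nhdsWithin] with c hc
      exact .of_forall (hbound c hc)
    · refine tendsto_nhds_of_eventually_eq ?_
      filter_upwards [eventually_quadraticRescale_eventuallyEq_quadForm
        (truncatedQuadForm_eventuallyEq G) p.1] with c hc
      exact controlledGenerator_congr a hc
  refine tendsto_nhds_unique hlim (tendsto_nhds_of_eventually_eq ?_)
  filter_upwards [self_mem_nhdsWithin] with c hc
  exact hμ (f c) (hsmooth c)
    (hasCompactSupport_quadraticRescale hc (hasCompactSupport_truncatedQuadForm G))

theorem two_mul_integral_dotProduct_mulVec (hμ : IsOccupationMeasure a μ) (hG : G.IsSymm)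
    (hint : Integrable (fun p => ‖G *ᵥ p.1‖ * ‖p.2‖) μ) :
    2 * ∫ p, p.2 ⬝ᵥ (G *ᵥ p.1) ∂μ = -(μ.real Set.univ * (a * G).trace) := by
  have hzero := integral_controlledGenerator_quadForm_eq_zero hμ hG hint
  simp only [controlledGenerator_quadForm a hG] at hzero
  rw [integral_add (integrable_const _) ((integrable_dotProduct_mulVec hint).const_mul 2),
    integral_const, integral_const_mul, smul_eq_mul] at hzero
  linarith

theorem integral_cost_eq_trace_add_integral_sq {P : Matrix (Fin d) (Fin d) ℝ} (hP : P.PosDef)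
    (hG : G.IsSymm) (hμ : IsOccupationMeasure a μ)
    (hint : Integrable
      (fun p => (G *ᵥ p.1) ⬝ᵥ (P⁻¹ *ᵥ (G *ᵥ p.1)) + p.2 ⬝ᵥ (P *ᵥ p.2)) μ) :
    ∫ p, ((G *ᵥ p.1) ⬝ᵥ (P⁻¹ *ᵥ (G *ᵥ p.1)) + p.2 ⬝ᵥ (P *ᵥ p.2)) ∂μ
      = μ.real Set.univ * (a * G).trace
        + ∫ p, (p.2 + P⁻¹ *ᵥ (G *ᵥ p.1)) ⬝ᵥ (P *ᵥ (p.2 + P⁻¹ *ᵥ (G *ᵥ p.1))) ∂μ := by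
  have hnorm := integrable_norm_mulVec_mul_norm hP hint
  have hdot := integrable_dotProduct_mulVec hnorm
  have hsq := dotProduct_mulVec_add_inv_mulVec (isHermitian_iff_isSymm.mp hP.isHermitian)
    hP.det_pos.ne'.isUnit
  simp only [hsq]
  rw [integral_add hint (hdot.const_mul 2), integral_const_mul,
    two_mul_integral_dotProduct_mulVec hμ hG hnorm]
  ring

end OccupationMeasure

theorem regular_control_lower_bound_general (a Q D G : Matrix (Fin d) (Fin d) ℝ)
    (hQ : Q.PosDef) (hG : G.IsSymm) (r l : ℝ) (hl : 0 < l)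
    (hGQ : G * Q⁻¹ * G = (r * l) • D)
    (μ : Measure ((Fin d → ℝ) × (Fin d → ℝ))) [IsFiniteMeasure μ]
    (hμint : Integrable
      (fun p => r * (p.1 ⬝ᵥ (D *ᵥ p.1)) + l * (p.2 ⬝ᵥ (Q *ᵥ p.2))) μ)
    (hμ : IsOccupationMeasure a μ) :
    μ.real Set.univ * (a * G).trace
      ≤ ∫ p, (r * (p.1 ⬝ᵥ (D *ᵥ p.1)) + l * (p.2 ⬝ᵥ (Q *ᵥ p.2))) ∂μ := by
  have hscaled : G * (l • Q)⁻¹ * G = r • D := by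
    have := invertibleOfNonzero hl.ne'
    rw [inv_smul _ _ hQ.det_pos.ne'.isUnit, Matrix.mul_smul, Matrix.smul_mul, hGQ, smul_smul,
      mul_comm r l, invOf_mul_cancel_left]
  have hstate (x : Fin d → ℝ) :
      r * (x ⬝ᵥ (D *ᵥ x)) = (G *ᵥ x) ⬝ᵥ ((l • Q)⁻¹ *ᵥ (G *ᵥ x)) := by
    rw [mulVec_dotProduct_mulVec_mulVec hG, hscaled, smul_mulVec, dotProduct_smul, smul_eq_mul]
  have hcontrol (u : Fin d → ℝ) : l * (u ⬝ᵥ (Q *ᵥ u)) = u ⬝ᵥ ((l • Q) *ᵥ u) := by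
    rw [smul_mulVec, dotProduct_smul, smul_eq_mul]
  simp only [hstate, hcontrol] at hμint ⊢
  have hP : (l • Q).PosDef := hQ.smul hl
  rw [integral_cost_eq_trace_add_integral_sq hP hG hμ hμint]
  exact le_add_of_nonneg_right
    (integral_nonneg fun p => hP.posSemidef.dotProduct_mulVec_nonneg _)

/-- **Sharp lower bound for time-average control with only regular control.**
If `G ≻ 0` satisfies `G Q⁻¹ G = r·l·D` and the occupation measure `μ` on
`ℝ^d_x × ℝ^d_u` satisfies `∫ [½ Σ a_{ij}∂²_{ij}f(x) + u·∇f(x)] dμ = 0` for every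
`f ∈ C²_c(ℝ^d)` with finite cost, then `∫ (r xᵀDx + l uᵀQu) dμ ≥ Tr(aG)`. -/
theorem regular_control_lower_bound {d : ℕ}
    (a Q D G : Matrix (Fin d) (Fin d) ℝ)
    (ha : a.PosSemidef) (hQ : Q.PosDef) (hD : D.PosDef) (hG : G.PosDef)
    (r l : ℝ) (hr : 0 < r) (hl : 0 < l)
    (hGQ : G * Q⁻¹ * G = (r * l) • D)
    (μ : Measure ((Fin d → ℝ) × (Fin d → ℝ))) [IsProbabilityMeasure μ]
    (hμint : Integrable
      (fun p => r * (p.1 ⬝ᵥ (D *ᵥ p.1)) + l * (p.2 ⬝ᵥ (Q *ᵥ p.2))) μ)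
    (hconstraint : ∀ f : (Fin d → ℝ) → ℝ, ContDiff ℝ 2 f → HasCompactSupport f →
      ∫ p, ((1/2 : ℝ) * ∑ i, ∑ j, a i j * secondPartial f i j p.1
          + fderiv ℝ f p.1 p.2) ∂μ = 0) :
    (∫ p, (r * (p.1 ⬝ᵥ (D *ᵥ p.1)) + l * (p.2 ⬝ᵥ (Q *ᵥ p.2))) ∂μ)
      ≥ (a * G).trace := by
  simpa only [probReal_univ, one_mul] using regular_control_lower_bound_general a Q D G hQ
    (isHermitian_iff_isSymm.mp hG.isHermitian) r l hl hGQ μ hμint hconstraint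
end
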